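/- Let S ⊆ [n]² be admissible, Ā ∈ M_S with ‖Ā‖_max ≤ 1, σ > 0, and let A ~ N_S(Ā, σ²Id). Then for every β > 1, E( log_β(c†(A)) ) ≤ log_β((1 + σ)/σ) + 2·log_β(n·|S|) + 2.65/ln β, where c†(A) = max_{k,l ∈ [n]} c†_{kl}(A) and c†_{kl}(A) is the componentwise condition number of the map A ↦ (A⁻¹)_{kl} at A (A is almost surely invertible). -/

import Mathlib

open MeasureTheory ProbabilityTheory
open scoped ENNReal

/-- Componentwise "distance" `d(u,v) = ‖(u−v)/v‖_∞`, valued in `[0,∞]`: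
the `i`-th component of the quotient is `|u i − v i|/|v i|` if `v i ≠ 0`,
`0` if `u i = v i = 0`, and `∞` otherwise. -/
noncomputable def cwDist {ι : Type*} (u v : ι → ℝ) : ℝ≥0∞ :=
  ⨆ i, if v i ≠ 0 then ENNReal.ofReal (|u i - v i| / |v i|)
       else if u i = v i then 0 else ⊤

/-- Componentwise condition number of `F : D ⊆ ℝ^ι → ℝ^κ` at `a`:
`c^F(a) = lim_{δ→0} sup { d(F x, F a)/d(x,a) : x ∈ D, d(x,a) ≤ δ, x ≠ a }`,
the limit being an infimum since the sup is monotone in `δ`. -/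
noncomputable def cwCond {ι κ : Type*} (D : Set (ι → ℝ)) (F : (ι → ℝ) → κ → ℝ)
    (a : ι → ℝ) : ℝ≥0∞ :=
  ⨅ δ ∈ Set.Ioi (0 : ℝ≥0∞),
    ⨆ x ∈ {x ∈ D | cwDist x a ≤ δ ∧ x ≠ a}, cwDist (F x) (F a) / cwDist x a

/-- A matrix viewed as a point of `ℝ^(n×n)`. -/
def matToFun {n : ℕ} (A : Matrix (Fin n) (Fin n) ℝ) : Fin n × Fin n → ℝ :=
  fun p => A p.1 p.2

/-- A point of `ℝ^(n×n)` viewed as a matrix. -/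
def funToMat {n : ℕ} (x : Fin n × Fin n → ℝ) : Matrix (Fin n) (Fin n) ℝ :=
  Matrix.of fun i j => x (i, j)

/-- The componentwise condition number `c^det(A)` of determinant computation at `A`. -/
noncomputable def cDet {n : ℕ} (A : Matrix (Fin n) (Fin n) ℝ) : ℝ≥0∞ :=
  cwCond Set.univ (fun x (_ : Unit) => (funToMat x).det) (matToFun A)

/-- The componentwise condition number `c†_{kl}(A)` of the map `A ↦ (A⁻¹)_{kl}` at `A`. -/
noncomputable def cInv {n : ℕ} (k l : Fin n) (A : Matrix (Fin n) (Fin n) ℝ) : ℝ≥0∞ :=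
  cwCond {x | IsUnit (funToMat x).det}
    (fun x (_ : Unit) => (funToMat x)⁻¹ k l) (matToFun A)

/-- `c†(A) = max_{k,l} c†_{kl}(A)`. -/
noncomputable def cInvMax {n : ℕ} (A : Matrix (Fin n) (Fin n) ℝ) : ℝ≥0∞ :=
  ⨆ k, ⨆ l, cInv k l A

/-- A pair (matrix, right-hand side) viewed as a point of `ℝ^(n×n+n)`. -/
def pairToFun {n : ℕ} (A : Matrix (Fin n) (Fin n) ℝ) (b : Fin n → ℝ) :
    (Fin n × Fin n) ⊕ Fin n → ℝ :=
  Sum.elim (fun p => A p.1 p.2) b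

def funToMat' {n : ℕ} (x : (Fin n × Fin n) ⊕ Fin n → ℝ) : Matrix (Fin n) (Fin n) ℝ :=
  Matrix.of fun i j => x (Sum.inl (i, j))

def funToVec {n : ℕ} (x : (Fin n × Fin n) ⊕ Fin n → ℝ) : Fin n → ℝ :=
  fun i => x (Sum.inr i)

/-- The componentwise condition number `c_k(A,b)` of the map `(A,b) ↦ (A⁻¹b)_k` at `(A,b)`. -/
noncomputable def cLin {n : ℕ} (k : Fin n) (A : Matrix (Fin n) (Fin n) ℝ)
    (b : Fin n → ℝ) : ℝ≥0∞ :=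
  cwCond {x | IsUnit (funToMat' x).det}
    (fun x (_ : Unit) => (Matrix.mulVec (funToMat' x)⁻¹ (funToVec x)) k) (pairToFun A b)

/-- `c(A,b) = max_k c_k(A,b)`. -/
noncomputable def cLinMax {n : ℕ} (A : Matrix (Fin n) (Fin n) ℝ) (b : Fin n → ℝ) : ℝ≥0∞ :=
  ⨆ k, cLin k A b

instance matrixMeasurableSpace {n : ℕ} : MeasurableSpace (Matrix (Fin n) (Fin n) ℝ) :=
  inferInstanceAs (MeasurableSpace (Fin n → Fin n → ℝ))

/-- The distribution `N_S(Ā, σ²Id)` of a random sparse matrix: the entries `a_{ij}` with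
`(i,j) ∈ S` are independent Gaussians `N(ā_{ij}, σ²)`, and `a_{ij} = 0` for `(i,j) ∉ S`. -/
noncomputable def sparseGaussian {n : ℕ} (S : Finset (Fin n × Fin n))
    (Abar : Matrix (Fin n) (Fin n) ℝ) (σ : ℝ) : Measure (Matrix (Fin n) (Fin n) ℝ) :=
  (Measure.pi fun p : S => gaussianReal (Abar p.1.1 p.1.2) ⟨σ ^ 2, sq_nonneg σ⟩).map
    fun g => Matrix.of fun i j => if h : (i, j) ∈ S then g ⟨(i, j), h⟩ else 0

/-- The distribution `N(b̄, σ²Id)` on `ℝⁿ`: independent Gaussian entries `N(b̄_i, σ²)`. -/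
noncomputable def vecGaussian {n : ℕ} (bbar : Fin n → ℝ) (σ : ℝ) : Measure (Fin n → ℝ) :=
  Measure.pi fun i => gaussianReal (bbar i) ⟨σ ^ 2, sq_nonneg σ⟩

/-- `S ⊆ [n]²` is admissible when `M_S` contains an invertible matrix. -/
def Admissible {n : ℕ} (S : Finset (Fin n × Fin n)) : Prop :=
  ∃ B : Matrix (Fin n) (Fin n) ℝ, (∀ i j, (i, j) ∉ S → B i j = 0) ∧ IsUnit B.det


lemma aux_pdf_bound (m σ : ℝ) (hm : |m| ≤ 1) (hσ : 0 < σ) (v : NNReal) (hvσ : (v : ℝ) = σ ^ 2) (x : ℝ) :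
    |x| * gaussianPDFReal m v x ≤ (5 / 12) * ((1 + σ) / σ) := by
  have hz : ∃ z, x = m + σ * z := ⟨(x - m) / σ, by field_simp; ring⟩
  obtain ⟨z, rfl⟩ := hz
  rw [gaussianPDFReal]
  have h1 : (2.4 : ℝ) * σ ≤ √(2 * Real.pi * v) := by
    apply Real.le_sqrt_of_sq_le
    rw [hvσ]
    have := Real.pi_gt_three
    have h2 : 0 < σ ^ 2 := by positivity
    nlinarith
  have h2 : (√(2 * Real.pi * v))⁻¹ ≤ (2.4 * σ)⁻¹ :=
    inv_anti₀ (by positivity) h1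
  have h3 : -(m + σ * z - m) ^ 2 / (2 * (v : ℝ)) = - (z ^ 2 / 2) := by
    rw [hvσ]
    field_simp
    ring
  rw [h3]
  have h4 : |m + σ * z| ≤ 1 + σ * |z| := by
    calc _ ≤ |m| + |σ * z| := abs_add_le _ _
      _ ≤ _ := by rw [abs_mul, abs_of_pos hσ]; linarith
  have h5 : Real.exp (-(z ^ 2 / 2)) ≤ 1 := by
    rw [Real.exp_le_one_iff]; nlinarith [sq_nonneg z]
  have h6 : |z| * Real.exp (-(z ^ 2 / 2)) ≤ 1 := by
    have : |z| ≤ Real.exp (z ^ 2 / 2) := by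
      have := Real.add_one_le_exp (z ^ 2 / 2)
      nlinarith [sq_nonneg (|z| - 1), sq_abs z]
    rw [Real.exp_neg, ← div_eq_mul_inv, div_le_one (Real.exp_pos _)]
    exact this
  have h7 := Real.exp_pos (-(z ^ 2 / 2))
  calc _ = (√(2 * Real.pi * v))⁻¹ *
        (|m + σ * z| * Real.exp (-(z ^ 2 / 2))) := by ring
    _ ≤ (2.4 * σ)⁻¹ * (1 + σ) := by
        apply mul_le_mul h2 _ (by positivity) (by positivity)
        calc _ ≤ (1 + σ * |z|) * Real.exp (-(z ^ 2 / 2)) := by gcongr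
          _ = Real.exp (-(z ^ 2 / 2)) + σ * (|z| * Real.exp (-(z ^ 2 / 2))) := by ring
          _ ≤ 1 + σ * 1 := by gcongr
          _ = _ := by ring
    _ = _ := by field_simp; norm_num

lemma aux_tail (m σ : ℝ) (hm : |m| ≤ 1) (hσ : 0 < σ) (v : NNReal) (hvσ : (v : ℝ) = σ ^ 2) (M R T : ℝ) (hT : 0 < T) :
    gaussianReal m v {y | T ≤ |y * M / (y * M + R)|}
      ≤ ENNReal.ofReal (5 / 2 * ((1 + σ) / σ) / T) := by
  have hv : v ≠ 0 := by
    intro h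
    rw [h, NNReal.coe_zero] at hvσ
    have : 0 < σ ^ 2 := by positivity
    linarith
  have hK : 1 ≤ (1 + σ) / σ := by rw [le_div_iff₀ hσ]; linarith
  rcases lt_or_ge T 2 with h2 | h2
  · refine prob_le_one.trans ?_
    rw [ENNReal.one_le_ofReal, le_div_iff₀ hT]
    linarith
  by_cases hM : M = 0
  · have : {y : ℝ | T ≤ |y * M / (y * M + R)|} = ∅ := by
      ext y; simp [hM, hT]
    rw [this]; simp
  by_cases hR : R = 0
  · have : {y : ℝ | T ≤ |y * M / (y * M + R)|} = ∅ := by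
      ext y
      simp only [hR, add_zero, Set.mem_ofPred_eq, Set.mem_empty_iff_false, iff_false, not_le]
      have := abs_div (y * M) (y * M) ▸ div_self_le_one |y * M|
      linarith
    rw [this]; simp
  obtain ⟨s, hs⟩ : ∃ s, s = - R / M := ⟨_, rfl⟩
  have hRs : R = - (s * M) := by rw [hs]; field_simp
  have hs0 : s ≠ 0 := by
    rw [hs]; exact div_ne_zero (neg_ne_zero.2 hR) hM
  have hsp : 0 < |s| := abs_pos.2 hs0
  have key : ∀ y ∈ {y : ℝ | T ≤ |y * M / (y * M + R)|}, T * |y - s| ≤ |y| := by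
    intro y hy
    have e : y * M / (y * M + R) = y / (y - s) := by
      rw [hRs, show y * M + -(s * M) = (y - s) * M by ring]
      exact mul_div_mul_right _ _ hM
    rw [Set.mem_ofPred_eq, e, abs_div] at hy
    have hys : 0 < |y - s| := by
      rcases (abs_nonneg (y - s)).eq_or_lt with h | h
      · rw [← h] at hy; simp at hy; linarith
      · exact h
    rwa [le_div_iff₀ hys] at hy
  have hms : MeasurableSet {y : ℝ | T ≤ |y * M / (y * M + R)|} := by
    apply measurableSet_le measurable_const
    fun_prop
  rw [gaussianReal_apply _ hv]
  have hT1 : 0 < T - 1 := by linarith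
  calc ∫⁻ x in {y | T ≤ |y * M / (y * M + R)|}, gaussianPDF m v x
      ≤ ∫⁻ x in {y | T ≤ |y * M / (y * M + R)|},
          ENNReal.ofReal ((5 / 12) * ((1 + σ) / σ) * ((T + 1) / (|s| * T))) := by
        apply setLIntegral_mono measurable_const
        intro y hy
        apply ENNReal.ofReal_le_ofReal
        have h := key y hy
        have h1 : |s| ≤ |y| + |y - s| := by
          have := abs_sub_abs_le_abs_sub s y
          rw [abs_sub_comm s y] at this; linarith
        have h3 : |s| * T ≤ |y| * (T + 1) := by nlinarith
        have hyp : 0 < |y| := by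
          by_contra h0
          have : |y| = 0 := le_antisymm (not_lt.1 h0) (abs_nonneg _)
          rw [this] at h3
          have : 0 < |s| * T := by positivity
          linarith
        have hb := aux_pdf_bound m σ hm hσ v hvσ y
        have h4 : 1 ≤ |y| * ((T + 1) / (|s| * T)) := by
          rw [← mul_div_assoc, le_div_iff₀ (by positivity)]; linarith
        have hp := gaussianPDFReal_nonneg m v y
        calc _ ≤ gaussianPDFReal m v y * (|y| * ((T + 1) / (|s| * T))) :=
              le_mul_of_one_le_right hp h4
          _ = (|y| * gaussianPDFReal m v y) * ((T + 1) / (|s| * T)) := by ring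
          _ ≤ _ := by gcongr
    _ = ENNReal.ofReal ((5 / 12) * ((1 + σ) / σ) * ((T + 1) / (|s| * T)))
          * volume {y | T ≤ |y * M / (y * M + R)|} := by
        rw [setLIntegral_const]
    _ ≤ ENNReal.ofReal ((5 / 12) * ((1 + σ) / σ) * ((T + 1) / (|s| * T)))
          * ENNReal.ofReal (2 * (|s| / (T - 1))) := by
        gcongr
        rw [← Real.volume_closedBall s]
        apply measure_mono
        intro y hy
        have h := key y hy
        rw [Metric.mem_closedBall, Real.dist_eq, le_div_iff₀ hT1]
        have h1 := abs_sub_abs_le_abs_sub y s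
        nlinarith
    _ = ENNReal.ofReal ((5 / 12) * ((1 + σ) / σ) * ((T + 1) / (|s| * T)) * (2 * (|s| / (T - 1)))) := by
        exact (ENNReal.ofReal_mul (by positivity)).symm
    _ ≤ _ := by
        apply ENNReal.ofReal_le_ofReal
        have : (5 / 12) * ((1 + σ) / σ) * ((T + 1) / (|s| * T)) * (2 * (|s| / (T - 1)))
            = (5 / 6 * ((1 + σ) / σ)) / T * ((T + 1) / (T - 1)) := by
          field_simp; ring
        rw [this]
        have h3 : (T + 1) / (T - 1) ≤ 3 := by
          rw [div_le_iff₀ hT1]; linarith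
        calc _ ≤ (5 / 6 * ((1 + σ) / σ)) / T * 3 := by gcongr
          _ = _ := by ring

lemma aux_log (m σ : ℝ) (hm : |m| ≤ 1) (hσ : 0 < σ) (v : NNReal) (hvσ : (v : ℝ) = σ ^ 2) (M R c : ℝ) (hc : 0 < c) :
    ∫⁻ y, ENNReal.ofReal (Real.posLog (|y * M / (y * M + R)| / c))
        ∂(gaussianReal m v)
      ≤ ENNReal.ofReal (5 / 2 * ((1 + σ) / σ) / c) := by
  rw [lintegral_eq_lintegral_meas_le]
  rotate_left
  · exact Filter.Eventually.of_forall fun _ => Real.posLog_nonneg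
  · apply Measurable.aemeasurable
    exact Real.continuous_posLog.measurable.comp (by fun_prop)
  calc _ ≤ ∫⁻ t in Set.Ioi (0:ℝ),
        ENNReal.ofReal (5 / 2 * ((1 + σ) / σ) / c * Real.exp (-t)) := by
        apply setLIntegral_mono (by fun_prop)
        intro t ht
        have ht : 0 < t := ht
        have h := aux_tail m σ hm hσ v hvσ M R (c * Real.exp t) (by positivity)
        rw [Real.exp_neg, ← div_eq_mul_inv, div_div]
        refine le_trans (measure_mono ?_) h
        intro y hy
        rw [Set.mem_ofPred_eq, Real.posLog_apply, le_max_iff] at hy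
        rcases hy with hy | hy
        · linarith
        · rw [Set.mem_ofPred_eq]
          have h0 : 0 < |y * M / (y * M + R)| / c := by
            by_contra h0
            have : |y * M / (y * M + R)| / c = 0 := le_antisymm (not_lt.1 h0) (by positivity)
            rw [this, Real.log_zero] at hy
            linarith
          rw [Real.le_log_iff_exp_le h0, le_div_iff₀ hc] at hy
          linarith
    _ = _ := by
        rw [← ofReal_integral_eq_lintegral_ofReal]
        · rw [integral_const_mul, integral_exp_neg_Ioi_zero, mul_one]
        · exact (integrableOn_exp_neg_Ioi 0).const_mul _
        · exact Filter.Eventually.of_forall fun _ => by positivity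

lemma aux_pi {ι : Type*} [Fintype ι] [DecidableEq ι] (μ : ι → Measure ℝ)
    [∀ i, IsProbabilityMeasure (μ i)] (f : (ι → ℝ) → ℝ≥0∞) (hf : Measurable f) (i : ι)
    (C : ℝ≥0∞) (h : ∀ x, ∫⁻ y, f (Function.update x i y) ∂μ i ≤ C) :
    ∫⁻ x, f x ∂Measure.pi μ ≤ C := by
  rw [lintegral_eq_lmarginal_univ (fun _ => 0), lmarginal_erase' f hf (Finset.mem_univ i)]
  refine (lmarginal_mono (g := fun _ => C) (fun x => h x) _).trans ?_
  simp [lmarginal]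

/-- The elementary contribution `|c_ij adj(C)_ji / det C|` of an entry to `c^det`. -/
noncomputable def auxY {n : ℕ} (C : Matrix (Fin n) (Fin n) ℝ) (i j : Fin n) : ℝ :=
  |C i j * C.adjugate j i / C.det|

/-- The contribution of an entry to `c^det` of the `(l,k)` minor. -/
noncomputable def auxZ {n : ℕ} (k l : Fin n) (A : Matrix (Fin n) (Fin n) ℝ) (i j : Fin n) : ℝ :=
  if l = i then 0 else auxY (A.updateRow l (Pi.single k 1)) i j

lemma auxY_nonneg {n : ℕ} (C : Matrix (Fin n) (Fin n) ℝ) (i j : Fin n) : 0 ≤ auxY C i j :=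
  abs_nonneg _

lemma auxZ_nonneg {n : ℕ} (k l : Fin n) (A : Matrix (Fin n) (Fin n) ℝ) (i j : Fin n) :
    0 ≤ auxZ k l A i j := by
  unfold auxZ; split_ifs
  · exact le_rfl
  · exact auxY_nonneg _ _ _

lemma auxY_family {n : ℕ} (C : ℝ → Matrix (Fin n) (Fin n) ℝ) (i j : Fin n)
    (h1 : ∀ y, C y i j = y) (h2 : ∀ y r s, (r, s) ≠ (i, j) → C y r s = C 0 r s) :
    ∃ M R : ℝ, ∀ y, auxY (C y) i j = |y * M / (y * M + R)| := by
  have hadj : ∀ y s, (C y).adjugate s i = (C 0).adjugate s i := by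
    intro y s
    rw [Matrix.adjugate_apply, Matrix.adjugate_apply]
    congr 1
    ext r t
    by_cases hr : r = i
    · subst hr; simp
    · rw [Matrix.updateRow_ne hr, Matrix.updateRow_ne hr]
      exact h2 y r t (by simp [hr])
  refine ⟨(C 0).adjugate j i, ∑ s ∈ Finset.univ.erase j, C 0 i s * (C 0).adjugate s i, fun y => ?_⟩
  unfold auxY
  rw [Matrix.det_eq_sum_mul_adjugate_row (C y) i, ← Finset.add_sum_erase _ _ (Finset.mem_univ j), h1,
    hadj]
  have e : ∑ s ∈ Finset.univ.erase j, C y i s * (C y).adjugate s i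
      = ∑ s ∈ Finset.univ.erase j, C 0 i s * (C 0).adjugate s i := by
    apply Finset.sum_congr rfl
    intro s hs
    rw [hadj, h2 y i s (by simp [Finset.ne_of_mem_erase hs])]
  rw [e]

lemma aux_inv_entry {n : ℕ} (A : Matrix (Fin n) (Fin n) ℝ) (i j : Fin n) :
    A⁻¹ i j = A.adjugate i j / A.det := by
  rw [Matrix.inv_def, Ring.inverse_eq_inv', Matrix.smul_apply, smul_eq_mul]
  ring

lemma aux_det_ne {n : ℕ} (A : Matrix (Fin n) (Fin n) ℝ) (k l : Fin n) (h : A⁻¹ k l ≠ 0) :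
    A.det ≠ 0 := by
  intro h0
  rw [aux_inv_entry, h0, div_zero] at h
  exact h rfl

lemma aux_term {n : ℕ} (A : Matrix (Fin n) (Fin n) ℝ) (k l : Fin n) (h : A⁻¹ k l ≠ 0)
    (i j : Fin n) :
    |A i j| * |A⁻¹ k i| * |A⁻¹ j l| / |A⁻¹ k l| ≤ auxY A i j + auxZ k l A i j := by
  have hdet := aux_det_ne A k l h
  have hu : IsUnit A.det := isUnit_iff_ne_zero.2 hdet
  have hY : ∀ C : Matrix (Fin n) (Fin n) ℝ, auxY C i j = |C i j * C⁻¹ j i| := by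
    intro C; rw [auxY, aux_inv_entry, mul_div_assoc]
  rw [← abs_mul, ← abs_mul, ← abs_div]
  unfold auxZ
  rw [hY, hY]
  split_ifs with hl
  · subst hl
    rw [add_zero]
    apply le_of_eq
    congr 1
    field_simp
  · have hne : i ≠ l := fun e => hl e.symm
    rw [Matrix.updateRow_ne hne]
    have hdet' : (A.updateRow l (Pi.single k 1)).det ≠ 0 := by
      rw [← Matrix.adjugate_apply]
      intro h0
      rw [aux_inv_entry, h0, zero_div] at h
      exact h rfl
    have hu' : IsUnit (A.updateRow l (Pi.single k 1)).det := isUnit_iff_ne_zero.2 hdet'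
    have hmulA : ∀ r s, ∑ t, A r t * A⁻¹ t s = if r = s then 1 else 0 := by
      intro r s
      have := Matrix.mul_nonsing_inv A hu
      have := congrFun (congrFun this r) s
      rwa [Matrix.mul_apply, Matrix.one_apply] at this
    have hvec : (A.updateRow l (Pi.single k 1)).mulVec
        (fun t => A⁻¹ t i - A⁻¹ t l * A⁻¹ k i / A⁻¹ k l) = Pi.single i 1 := by
      ext r
      by_cases hr : r = l
      · subst hr
        simp only [Matrix.mulVec, Matrix.updateRow_self, single_dotProduct, one_mul]
        rw [Pi.single_eq_of_ne hl]
        field_simp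
        ring
      · simp only [Matrix.mulVec, dotProduct]
        rw [Matrix.updateRow_ne hr]
        have : ∀ t, A r t * (A⁻¹ t i - A⁻¹ t l * A⁻¹ k i / A⁻¹ k l)
            = A r t * A⁻¹ t i - (A r t * A⁻¹ t l) * (A⁻¹ k i / A⁻¹ k l) := by
          intro t; ring
        simp_rw [this]
        rw [Finset.sum_sub_distrib, ← Finset.sum_mul, hmulA, hmulA, if_neg hr, Pi.single_apply]
        ring
    have hC : (A.updateRow l (Pi.single k 1))⁻¹ j i
        = A⁻¹ j i - A⁻¹ j l * A⁻¹ k i / A⁻¹ k l := by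
      have h5 := congrArg (fun v => (A.updateRow l (Pi.single k 1))⁻¹.mulVec v j) hvec
      simp only [Matrix.mulVec_mulVec, Matrix.nonsing_inv_mul _ hu', Matrix.one_mulVec] at h5
      rw [h5, Matrix.mulVec_single_one]
      rfl
    rw [hC]
    have : A i j * A⁻¹ k i * A⁻¹ j l / A⁻¹ k l
        = A i j * A⁻¹ j i - A i j * (A⁻¹ j i - A⁻¹ j l * A⁻¹ k i / A⁻¹ k l) := by ring
    rw [this]
    exact abs_sub _ _

lemma aux_cwDist {ι : Type*} (u v : ι → ℝ) (h : cwDist u v ≠ ⊤) (i : ι) :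
    |u i - v i| ≤ (cwDist u v).toReal * |v i| := by
  have hi : (if v i ≠ 0 then ENNReal.ofReal (|u i - v i| / |v i|)
       else if u i = v i then 0 else ⊤) ≤ cwDist u v :=
    le_iSup (fun i => if v i ≠ 0 then ENNReal.ofReal (|u i - v i| / |v i|)
       else if u i = v i then 0 else ⊤) i
  by_cases hv : v i = 0
  · by_cases hu : u i = v i
    · rw [hu]; simp [hv]
    · simp only [hv, ne_eq, not_true_eq_false, if_false] at hi
      rw [hv] at hu
      rw [if_neg hu] at hi
      exact absurd (top_le_iff.1 hi) h
  · rw [if_pos hv] at hi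
    have := (ENNReal.ofReal_le_iff_le_toReal h).1 hi
    rwa [div_le_iff₀ (abs_pos.2 hv)] at this

lemma aux_cwDist_ne_zero {ι : Type*} (u v : ι → ℝ) (h : u ≠ v) : cwDist u v ≠ 0 := by
  intro h0
  apply h
  ext i
  have := aux_cwDist u v (by simp [h0]) i
  rw [h0] at this
  simp at this
  linarith

lemma aux_cwDist_unit (u v : Unit → ℝ) : cwDist u v =
    if v () ≠ 0 then ENNReal.ofReal (|u () - v ()| / |v ()|)
       else if u () = v () then 0 else ⊤ := by
  unfold cwDist
  rw [iSup_unique]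

lemma aux_cond_zero {ι : Type*} (D : Set (ι → ℝ)) (F : (ι → ℝ) → Unit → ℝ) (a : ι → ℝ)
    (h : F a () = 0) : cwCond D F a = 0 ∨ cwCond D F a = ⊤ := by
  by_cases hc : ∃ δ : ℝ≥0∞, 0 < δ ∧ ∀ x ∈ D, cwDist x a ≤ δ → F x () = 0
  · left
    obtain ⟨δ, hδ, hx⟩ := hc
    rw [← nonpos_iff_eq_zero]
    unfold cwCond
    refine iInf₂_le_of_le δ hδ ?_
    refine iSup₂_le fun x hx' => ?_
    rw [aux_cwDist_unit, h, hx x hx'.1 hx'.2.1]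
    simp
  · right
    push Not at hc
    unfold cwCond
    simp only [iInf_eq_top]
    intro δ hδ
    obtain ⟨x, hxD, hxd, hxF⟩ := hc (min δ 1) (lt_min hδ one_pos)
    rw [← top_le_iff]
    refine le_iSup₂_of_le x ⟨hxD, hxd.trans (min_le_left _ _), ?_⟩ ?_
    · rintro rfl; exact hxF h
    · rw [aux_cwDist_unit, h]
      simp only [ne_eq, not_true_eq_false, if_false, hxF]
      rw [ENNReal.top_div_of_ne_top]
      exact ne_top_of_le_ne_top ENNReal.one_ne_top (hxd.trans (min_le_right _ _))

lemma aux_cInv_le {n : ℕ} (A : Matrix (Fin n) (Fin n) ℝ) (k l : Fin n) (h : A⁻¹ k l ≠ 0) :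
    cInv k l A ≤ ENNReal.ofReal
      (∑ i, ∑ j, |A i j| * |A⁻¹ k i| * |A⁻¹ j l| / |A⁻¹ k l|) := by
  have hdet := aux_det_ne A k l h
  have hu : IsUnit A.det := isUnit_iff_ne_zero.2 hdet
  have hA : funToMat (matToFun A) = A := rfl
  set a := matToFun A with ha
  set G : (Fin n × Fin n → ℝ) → ℝ := fun x =>
    ∑ i, ∑ j, |A i j| * |(funToMat x)⁻¹ k i| * |A⁻¹ j l| / |A⁻¹ k l| with hG
  have hcf : Continuous (fun x : Fin n × Fin n → ℝ => funToMat x) := by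
    apply continuous_matrix
    intro i j
    exact continuous_apply (i, j)
  have hcinv : ∀ i, ContinuousAt (fun x => (funToMat x)⁻¹ k i) a := by
    intro i
    simp_rw [aux_inv_entry]
    apply ContinuousAt.div
    · exact (hcf.matrix_adjugate.matrix_elem k i).continuousAt
    · exact hcf.matrix_det.continuousAt
    · exact hdet
  have hGc : ContinuousAt G a := by
    rw [hG]
    refine tendsto_finsetSum _ fun i _ => tendsto_finsetSum _ fun j _ => ?_
    exact ((tendsto_const_nhds.mul (hcinv i).abs).mul tendsto_const_nhds).div_const _
  have hG0 : ∀ x, 0 ≤ G x := fun x => by rw [hG]; positivity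
  change cInv k l A ≤ ENNReal.ofReal (G a)
  apply ENNReal.le_of_forall_pos_le_add
  intro ε hε _
  obtain ⟨r, hr, hrG⟩ := Metric.continuousAt_iff.1 hGc ε (by exact_mod_cast hε)
  unfold cInv cwCond
  have hδ : 0 < r / (2 * (‖a‖ + 1)) := by positivity
  refine iInf₂_le_of_le (ENNReal.ofReal (r / (2 * (‖a‖ + 1)))) (ENNReal.ofReal_pos.2 hδ) ?_
  refine iSup₂_le fun x hx => ?_
  obtain ⟨hxD, hxd, hxa⟩ := hx
  have htop : cwDist x a ≠ ⊤ := ne_top_of_le_ne_top ENNReal.ofReal_ne_top hxd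
  have hne := aux_cwDist_ne_zero x a hxa
  have hd := aux_cwDist x a htop
  set d := (cwDist x a).toReal with hdd
  have hd0 : 0 ≤ d := ENNReal.toReal_nonneg
  have hdle : d ≤ r / (2 * (‖a‖ + 1)) := ENNReal.toReal_le_of_le_ofReal hδ.le hxd
  have hdist : dist x a < r := by
    rw [dist_pi_lt_iff hr]
    intro p
    rw [Real.dist_eq]
    calc _ ≤ d * |a p| := hd p
      _ ≤ r / (2 * (‖a‖ + 1)) * (‖a‖ + 1) := by
          gcongr
          have := norm_le_pi_norm a p
          rw [Real.norm_eq_abs] at this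
          linarith
      _ = r / 2 := by field_simp
      _ < r := by linarith
  have hGx : G x ≤ G a + ε := by
    have := hrG hdist
    rw [Real.dist_eq, abs_lt] at this
    linarith
  apply ENNReal.div_le_of_le_mul
  rw [aux_cwDist_unit]
  change (if A⁻¹ k l ≠ 0 then ENNReal.ofReal (|(funToMat x)⁻¹ k l - A⁻¹ k l| / |A⁻¹ k l|)
    else if (funToMat x)⁻¹ k l = A⁻¹ k l then 0 else ⊤) ≤ (ENNReal.ofReal (G a) + ε) * cwDist x a
  rw [if_pos h]
  have hdiff : (funToMat x)⁻¹ k l - A⁻¹ k l =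
      ∑ i, ∑ j, (funToMat x)⁻¹ k i * (A i j - funToMat x i j) * A⁻¹ j l := by
    have e : (funToMat x)⁻¹ - A⁻¹ = (funToMat x)⁻¹ * (A - funToMat x) * A⁻¹ := by
      rw [mul_sub, sub_mul, mul_assoc, Matrix.mul_nonsing_inv A hu,
        Matrix.nonsing_inv_mul _ hxD, mul_one, one_mul]
    have := congrFun (congrFun e k) l
    rw [Matrix.sub_apply] at this
    rw [this, mul_assoc, Matrix.mul_apply]
    refine Finset.sum_congr rfl fun i _ => ?_
    rw [Matrix.mul_apply, Finset.mul_sum]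
    refine Finset.sum_congr rfl fun j _ => ?_
    rw [Matrix.sub_apply]; ring
  have hb : |(funToMat x)⁻¹ k l - A⁻¹ k l| / |A⁻¹ k l| ≤ G x * d := by
    rw [hdiff, div_le_iff₀ (abs_pos.2 h), hG]
    calc _ ≤ ∑ i, ∑ j, |(funToMat x)⁻¹ k i * (A i j - funToMat x i j) * A⁻¹ j l| :=
          (Finset.abs_sum_le_sum_abs _ _).trans
            (Finset.sum_le_sum fun i _ => Finset.abs_sum_le_sum_abs _ _)
      _ ≤ ∑ i, ∑ j, |A i j| * |(funToMat x)⁻¹ k i| * |A⁻¹ j l| / |A⁻¹ k l| * (d * |A⁻¹ k l|) := by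
          refine Finset.sum_le_sum fun i _ => Finset.sum_le_sum fun j _ => ?_
          have h1 : |A i j - funToMat x i j| ≤ d * |A i j| := by
            rw [abs_sub_comm]; exact hd (i, j)
          have h2 : |A⁻¹ k l| ≠ 0 := (abs_pos.2 h).ne'
          rw [abs_mul, abs_mul]
          calc _ ≤ |(funToMat x)⁻¹ k i| * (d * |A i j|) * |A⁻¹ j l| := by gcongr
            _ = _ := by field_simp
      _ = _ := by simp_rw [← Finset.sum_mul]; ring
  calc _ ≤ ENNReal.ofReal (G x * d) := ENNReal.ofReal_le_ofReal hb
    _ = ENNReal.ofReal (G x) * ENNReal.ofReal d := ENNReal.ofReal_mul (hG0 x)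
    _ = ENNReal.ofReal (G x) * cwDist x a := by rw [hdd, ENNReal.ofReal_toReal htop]
    _ ≤ _ := by
        gcongr
        calc _ ≤ ENNReal.ofReal (G a + ε) := ENNReal.ofReal_le_ofReal hGx
          _ = _ := by rw [ENNReal.ofReal_add (hG0 a) (NNReal.coe_nonneg ε), ENNReal.ofReal_coe_nnreal]

/-- The sparse matrix with the prescribed entries on `S`. -/
def auxMat {n : ℕ} (S : Finset (Fin n × Fin n)) (g : S → ℝ) : Matrix (Fin n) (Fin n) ℝ :=
  Matrix.of fun i j => if h : (i, j) ∈ S then g ⟨(i, j), h⟩ else 0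

lemma auxMat_continuous {n : ℕ} (S : Finset (Fin n × Fin n)) : Continuous (auxMat S) := by
  apply continuous_matrix
  intro i j
  unfold auxMat
  simp only [Matrix.of_apply]
  split_ifs with h
  · exact continuous_apply _
  · exact continuous_const

lemma aux_int {n : ℕ} (S : Finset (Fin n × Fin n)) (Abar : Matrix (Fin n) (Fin n) ℝ)
    (hmax : ∀ i j, |Abar i j| ≤ 1) (σ : ℝ) (hσ : 0 < σ) (v : NNReal) (hv : (v : ℝ) = σ ^ 2)
    (c : ℝ) (hc : 0 < c) (f : (S → ℝ) → ℝ) (hf : Measurable f) (p : S)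
    (h : ∀ x, ∃ M R : ℝ, ∀ y, f (Function.update x p y) = |y * M / (y * M + R)|) :
    Integrable (fun g => Real.posLog (f g / c))
      (Measure.pi fun p : S => gaussianReal (Abar p.1.1 p.1.2) v) ∧
    ∫ g, Real.posLog (f g / c) ∂(Measure.pi fun p : S => gaussianReal (Abar p.1.1 p.1.2) v)
      ≤ 5 / 2 * ((1 + σ) / σ) / c := by
  have hm : Measurable (fun g => Real.posLog (f g / c)) :=
    Real.continuous_posLog.measurable.comp (hf.div_const c)
  have hlt : ∫⁻ g, ENNReal.ofReal (Real.posLog (f g / c))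
      ∂(Measure.pi fun p : S => gaussianReal (Abar p.1.1 p.1.2) v)
      ≤ ENNReal.ofReal (5 / 2 * ((1 + σ) / σ) / c) := by
    apply aux_pi _ _ hm.ennreal_ofReal p
    intro x
    obtain ⟨M, R, hMR⟩ := h x
    simp_rw [hMR]
    exact aux_log _ σ (hmax _ _) hσ v hv M R c hc
  constructor
  · refine ⟨hm.aestronglyMeasurable, ?_⟩
    rw [hasFiniteIntegral_iff_ofReal (Filter.Eventually.of_forall fun _ => Real.posLog_nonneg)]
    exact hlt.trans_lt ENNReal.ofReal_lt_top
  · rw [integral_eq_lintegral_of_nonneg_ae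
      (Filter.Eventually.of_forall fun _ => Real.posLog_nonneg) hm.aestronglyMeasurable]
    exact ENNReal.toReal_le_of_le_ofReal (by positivity) hlt

lemma auxMat_update {n : ℕ} (S : Finset (Fin n × Fin n)) (x : S → ℝ) (p : S) (y : ℝ) :
    auxMat S (Function.update x p y) p.1.1 p.1.2 = y := by
  unfold auxMat
  simp

lemma auxMat_update_ne {n : ℕ} (S : Finset (Fin n × Fin n)) (x : S → ℝ) (p : S) (y : ℝ)
    (r s : Fin n) (h : (r, s) ≠ (p.1.1, p.1.2)) :
    auxMat S (Function.update x p y) r s = auxMat S x r s := by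
  unfold auxMat
  simp only [Matrix.of_apply]
  split_ifs with h'
  · rw [Function.update_of_ne]
    intro e
    apply h
    rw [← e]
  · rfl

lemma auxY_measurable {n : ℕ} {X : Type*} [TopologicalSpace X] [MeasurableSpace X]
    [OpensMeasurableSpace X] (Φ : X → Matrix (Fin n) (Fin n) ℝ)
    (hΦ : Continuous Φ) (i j : Fin n) : Measurable (fun g => auxY (Φ g) i j) := by
  unfold auxY
  have h1 : Measurable (fun g => Φ g i j * (Φ g).adjugate j i) :=
    ((hΦ.matrix_elem i j).mul (hΦ.matrix_adjugate.matrix_elem j i)).measurable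
  have h2 : Measurable (fun g => (Φ g).det) := hΦ.matrix_det.measurable
  exact (h1.div h2).abs

lemma aux_intY {n : ℕ} (S : Finset (Fin n × Fin n)) (Abar : Matrix (Fin n) (Fin n) ℝ)
    (hmax : ∀ i j, |Abar i j| ≤ 1) (σ : ℝ) (hσ : 0 < σ) (v : NNReal) (hv : (v : ℝ) = σ ^ 2)
    (c : ℝ) (hc : 0 < c) (p : S) :
    Integrable (fun g => Real.posLog (auxY (auxMat S g) p.1.1 p.1.2 / c))
      (Measure.pi fun p : S => gaussianReal (Abar p.1.1 p.1.2) v) ∧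
    ∫ g, Real.posLog (auxY (auxMat S g) p.1.1 p.1.2 / c)
      ∂(Measure.pi fun p : S => gaussianReal (Abar p.1.1 p.1.2) v)
      ≤ 5 / 2 * ((1 + σ) / σ) / c := by
  refine aux_int S Abar hmax σ hσ v hv c hc (fun g => auxY (auxMat S g) p.1.1 p.1.2)
    (auxY_measurable _ (auxMat_continuous S) _ _) p fun x => ?_
  refine auxY_family (fun y => auxMat S (Function.update x p y)) p.1.1 p.1.2 ?_ ?_
  · intro y; exact auxMat_update S x p y
  · intro y r s h
    simp only [auxMat_update_ne S x p _ r s h]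

lemma aux_intZ {n : ℕ} (S : Finset (Fin n × Fin n)) (Abar : Matrix (Fin n) (Fin n) ℝ)
    (hmax : ∀ i j, |Abar i j| ≤ 1) (σ : ℝ) (hσ : 0 < σ) (v : NNReal) (hv : (v : ℝ) = σ ^ 2)
    (c : ℝ) (hc : 0 < c) (p : S) (k l : Fin n) :
    Integrable (fun g => Real.posLog (auxZ k l (auxMat S g) p.1.1 p.1.2 / c))
      (Measure.pi fun p : S => gaussianReal (Abar p.1.1 p.1.2) v) ∧
    ∫ g, Real.posLog (auxZ k l (auxMat S g) p.1.1 p.1.2 / c)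
      ∂(Measure.pi fun p : S => gaussianReal (Abar p.1.1 p.1.2) v)
      ≤ 5 / 2 * ((1 + σ) / σ) / c - (if l = p.1.1 then 5 / 2 * ((1 + σ) / σ) / c else 0) := by
  unfold auxZ
  by_cases hl : l = p.1.1
  · simp [hl]
  simp only [if_neg hl, sub_zero]
  have hne : p.1.1 ≠ l := fun e => hl e.symm
  refine aux_int S Abar hmax σ hσ v hv c hc
    (fun g => auxY ((auxMat S g).updateRow l (Pi.single k 1)) p.1.1 p.1.2)
    (auxY_measurable (fun g => (auxMat S g).updateRow l (Pi.single k 1))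
      ((auxMat_continuous S).matrix_updateRow l continuous_const) _ _) p fun x => ?_
  refine auxY_family (fun y => (auxMat S (Function.update x p y)).updateRow l (Pi.single k 1))
    p.1.1 p.1.2 ?_ ?_
  · intro y
    simp only [Matrix.updateRow_ne hne]
    exact auxMat_update S x p y
  · intro y r s h
    by_cases hr : r = l
    · subst hr; simp
    · simp only [Matrix.updateRow_ne hr, auxMat_update_ne S x p _ r s h]

/-- The total positive-logarithm error term. -/
noncomputable def auxT {n : ℕ} (S : Finset (Fin n × Fin n)) (c : ℝ) (g : S → ℝ) : ℝ :=
  ∑ p : S, (Real.posLog (auxY (auxMat S g) p.1.1 p.1.2 / c) +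
    ∑ k, ∑ l, Real.posLog (auxZ k l (auxMat S g) p.1.1 p.1.2 / c))

lemma aux_le_exp (X c t : ℝ) (hc : 0 < c) (ht : Real.posLog (X / c) ≤ t) :
    X ≤ c * Real.exp t := by
  rcases le_or_gt X 0 with h | h
  · exact h.trans (by positivity)
  · have h1 : Real.log (X / c) ≤ t := (le_max_right _ _).trans ht
    rw [Real.log_le_iff_le_exp (by positivity), div_le_iff₀ hc] at h1
    linarith

lemma aux_pointwise {n : ℕ} (S : Finset (Fin n × Fin n)) (c : ℝ) (hc : 1 ≤ c) (hS : 1 ≤ S.card)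
    (g : S → ℝ) :
    Real.log (cInvMax (auxMat S g)).toReal
      ≤ Real.log (2 * S.card) + Real.log c + auxT S c g := by
  have hc0 : 0 < c := by linarith
  have hS' : (1 : ℝ) ≤ S.card := by exact_mod_cast hS
  set A := auxMat S g with hA
  have hT1 : ∀ p : S, Real.posLog (auxY A p.1.1 p.1.2 / c) +
      ∑ k, ∑ l, Real.posLog (auxZ k l A p.1.1 p.1.2 / c) ≤ auxT S c g := by
    intro p
    exact Finset.single_le_sum (f := fun p : S => Real.posLog (auxY A p.1.1 p.1.2 / c) +
      ∑ k, ∑ l, Real.posLog (auxZ k l A p.1.1 p.1.2 / c))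
      (fun p _ => add_nonneg Real.posLog_nonneg
        (Finset.sum_nonneg fun _ _ => Finset.sum_nonneg fun _ _ => Real.posLog_nonneg))
      (Finset.mem_univ p)
  have hT0 : 0 ≤ auxT S c g :=
    Finset.sum_nonneg fun p _ => add_nonneg Real.posLog_nonneg
        (Finset.sum_nonneg fun _ _ => Finset.sum_nonneg fun _ _ => Real.posLog_nonneg)
  have hY : ∀ p : S, auxY A p.1.1 p.1.2 ≤ c * Real.exp (auxT S c g) := by
    intro p
    refine aux_le_exp _ _ _ hc0 (le_trans ?_ (hT1 p))
    exact le_add_of_nonneg_right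
      (Finset.sum_nonneg fun _ _ => Finset.sum_nonneg fun _ _ => Real.posLog_nonneg)
  have hZ : ∀ (p : S) k l, auxZ k l A p.1.1 p.1.2 ≤ c * Real.exp (auxT S c g) := by
    intro p k l
    refine aux_le_exp _ _ _ hc0 (le_trans ?_ (hT1 p))
    refine le_trans ?_ (le_add_of_nonneg_left Real.posLog_nonneg)
    refine le_trans ?_ (Finset.single_le_sum
      (f := fun k => ∑ l, Real.posLog (auxZ k l A p.1.1 p.1.2 / c))
      (fun _ _ => Finset.sum_nonneg fun _ _ => Real.posLog_nonneg) (Finset.mem_univ k))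
    exact Finset.single_le_sum
      (f := fun l => Real.posLog (auxZ k l A p.1.1 p.1.2 / c))
      (fun _ _ => Real.posLog_nonneg) (Finset.mem_univ l)
  set V := c * Real.exp (auxT S c g) with hV
  have hV1 : 1 ≤ V := by
    have := Real.one_le_exp hT0
    nlinarith
  have hW1 : 1 ≤ 2 * (S.card : ℝ) * V := by nlinarith
  have hrhs : Real.log (2 * S.card) + Real.log c + auxT S c g = Real.log (2 * S.card * V) := by
    have e1 : Real.log (2 * S.card * V) = Real.log (2 * S.card) + Real.log V :=
      Real.log_mul (by positivity) (by positivity)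
    have e2 : Real.log V = Real.log c + auxT S c g := by
      rw [hV, Real.log_mul (by positivity) (by positivity), Real.log_exp]
    rw [e1, e2]
    ring
  rw [hrhs]
  by_cases htop : cInvMax A = ⊤
  · rw [htop]
    simpa using Real.log_nonneg hW1
  have hle : cInvMax A ≤ ENNReal.ofReal (2 * S.card * V) := by
    refine iSup_le fun k => iSup_le fun l => ?_
    have hkl : cInv k l A ≤ cInvMax A := le_iSup_of_le k (le_iSup (fun l => cInv k l A) l)
    by_cases h0 : A⁻¹ k l = 0
    · rcases aux_cond_zero {x | IsUnit (funToMat x).det}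
        (fun x (_ : Unit) => (funToMat x)⁻¹ k l) (matToFun A) h0 with h | h
      · have h' : cInv k l A = 0 := h
        rw [h']; exact zero_le
      · have h' : cInv k l A = ⊤ := h
        rw [h', top_le_iff] at hkl
        exact absurd hkl htop
    · refine (aux_cInv_le A k l h0).trans (ENNReal.ofReal_le_ofReal ?_)
      rw [← Finset.sum_product', Finset.univ_product_univ]
      rw [← Finset.sum_subset (Finset.subset_univ S)]
      · calc _ ≤ ∑ p ∈ S, (2 * V) := by
              refine Finset.sum_le_sum fun p hp => ?_
              have h1 := aux_term A k l h0 p.1 p.2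
              have h2 := hY ⟨p, hp⟩
              have h3 := hZ ⟨p, hp⟩ k l
              simp only at h2 h3
              linarith
          _ = _ := by rw [Finset.sum_const, nsmul_eq_mul]; ring
      · intro p _ hp
        have : A p.1 p.2 = 0 := by
          rw [hA]; unfold auxMat; simp [hp]
        simp [this]
  have hre : (cInvMax A).toReal ≤ 2 * S.card * V := ENNReal.toReal_le_of_le_ofReal (by positivity) hle
  rcases (ENNReal.toReal_nonneg (a := cInvMax A)).eq_or_lt with h | h
  · rw [← h, Real.log_zero]; exact Real.log_nonneg hW1
  · exact Real.log_le_log h hre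

lemma auxT_int {n : ℕ} (hn : 1 ≤ n) (S : Finset (Fin n × Fin n)) (hS : 1 ≤ S.card)
    (Abar : Matrix (Fin n) (Fin n) ℝ)
    (hmax : ∀ i j, |Abar i j| ≤ 1) (σ : ℝ) (hσ : 0 < σ) (v : NNReal) (hv : (v : ℝ) = σ ^ 2)
    (c : ℝ) (hc : c = (n : ℝ) ^ 2 * S.card * (5 / 2 * ((1 + σ) / σ))) :
    Integrable (auxT S c)
      (Measure.pi fun p : S => gaussianReal (Abar p.1.1 p.1.2) v) ∧
    ∫ g, auxT S c g ∂(Measure.pi fun p : S => gaussianReal (Abar p.1.1 p.1.2) v) ≤ 1 := by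
  have hS' : (1 : ℝ) ≤ S.card := by exact_mod_cast hS
  have hn' : (1 : ℝ) ≤ n := by exact_mod_cast hn
  have hc0 : 0 < c := by rw [hc]; positivity
  have iY := aux_intY S Abar hmax σ hσ v hv c hc0
  have iZ := aux_intZ S Abar hmax σ hσ v hv c hc0
  have iZ1 : ∀ p : S, Integrable (fun g => ∑ k, ∑ l,
      Real.posLog (auxZ k l (auxMat S g) p.1.1 p.1.2 / c))
      (Measure.pi fun p : S => gaussianReal (Abar p.1.1 p.1.2) v) := fun p =>
    integrable_finsetSum _ fun k _ => integrable_finsetSum _ fun l _ => (iZ p k l).1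
  have iA : ∀ p : S, Integrable (fun g => Real.posLog (auxY (auxMat S g) p.1.1 p.1.2 / c) +
      ∑ k, ∑ l, Real.posLog (auxZ k l (auxMat S g) p.1.1 p.1.2 / c))
      (Measure.pi fun p : S => gaussianReal (Abar p.1.1 p.1.2) v) := fun p =>
    (iY p).1.add (iZ1 p)
  unfold auxT
  refine ⟨integrable_finsetSum _ fun p _ => iA p, ?_⟩
  rw [integral_finsetSum _ fun p _ => iA p]
  set q := 5 / 2 * ((1 + σ) / σ) / c with hq
  have hq0 : 0 < q := by positivity
  calc _ ≤ ∑ p : S, (n : ℝ) ^ 2 * q := by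
        refine Finset.sum_le_sum fun p _ => ?_
        rw [integral_add (iY p).1 (iZ1 p), integral_finsetSum _ fun k _ =>
          integrable_finsetSum _ fun l _ => (iZ p k l).1]
        have h1 : ∀ k, ∫ g, ∑ l, Real.posLog (auxZ k l (auxMat S g) p.1.1 p.1.2 / c)
            ∂(Measure.pi fun p : S => gaussianReal (Abar p.1.1 p.1.2) v) ≤ n * q - q := by
          intro k
          rw [integral_finsetSum _ fun l _ => (iZ p k l).1]
          refine (Finset.sum_le_sum fun l _ => (iZ p k l).2).trans ?_
          rw [Finset.sum_sub_distrib]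
          simp
        have h2 := Finset.sum_le_sum fun k (_ : k ∈ Finset.univ) => h1 k
        rw [Finset.sum_const, Finset.card_univ, Fintype.card_fin, nsmul_eq_mul] at h2
        have h3 := (iY p).2
        nlinarith
    _ = (n : ℝ) ^ 2 * S.card * q := by
        rw [Finset.sum_const, Finset.card_univ, Fintype.card_coe, nsmul_eq_mul]; ring
    _ = 1 := by
        rw [hq, ← mul_div_assoc, ← hc]
        exact div_self hc0.ne'
    _ ≤ 1 := le_rfl

lemma aux_card {n : ℕ} (hn : 1 ≤ n) (S : Finset (Fin n × Fin n)) (hS : Admissible S) :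
    1 ≤ S.card := by
  rw [Nat.one_le_iff_ne_zero]
  intro h
  rw [Finset.card_eq_zero] at h
  subst h
  obtain ⟨B, hB, hu⟩ := hS
  have : B = 0 := by ext i j; exact hB i j (by simp)
  rw [this] at hu
  have : Nonempty (Fin n) := ⟨⟨0, hn⟩⟩
  rw [Matrix.det_zero] at hu
  simp at hu

lemma aux_log_five : Real.log 5 ≤ 1.65 := by
  have h2 := Real.log_two_lt_d9
  have h : (5 : ℝ) = 2 * 2 * (5 / 4) := by norm_num
  rw [h, Real.log_mul (by norm_num) (by norm_num), Real.log_mul (by norm_num) (by norm_num)]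
  have := Real.log_le_sub_one_of_pos (show (0:ℝ) < 5 / 4 by norm_num)
  linarith


/-- Let `S ⊆ [n]²` be admissible, `Ā ∈ M_S` with `‖Ā‖_max ≤ 1`, `σ > 0`
and `A ~ N_S(Ā, σ²Id)`. For every `β > 1`,
`E(log_β(c†(A))) ≤ log_β((1+σ)/σ) + 2·log_β(n·|S|) + 2.65/ln β`,
where `c†(A) = max_{k,l} c†_{kl}(A)`. -/
theorem expectation_log_cInvMax_le {n : ℕ} (S : Finset (Fin n × Fin n)) (hS : Admissible S)
    (Abar : Matrix (Fin n) (Fin n) ℝ) (hsupp : ∀ i j, (i, j) ∉ S → Abar i j = 0)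
    (hmax : ∀ i j, |Abar i j| ≤ 1) (σ : ℝ) (hσ : 0 < σ)
    (β : ℝ) (hβ : 1 < β) :
    ∫ A, Real.log (cInvMax A).toReal / Real.log β ∂(sparseGaussian S Abar σ)
      ≤ Real.log ((1 + σ) / σ) / Real.log β
          + 2 * (Real.log ((n : ℝ) * S.card) / Real.log β) + 2.65 / Real.log β := by
  have hlb : 0 < Real.log β := Real.log_pos hβ
  have hK : 1 ≤ (1 + σ) / σ := by rw [le_div_iff₀ hσ]; linarith
  have hlK := Real.log_nonneg hK
  have hlN : 0 ≤ Real.log ((n : ℝ) * S.card) := by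
    have := Real.log_natCast_nonneg (n * S.card)
    rwa [Nat.cast_mul] at this
  have hR0 : 0 ≤ Real.log ((1 + σ) / σ) / Real.log β
          + 2 * (Real.log ((n : ℝ) * S.card) / Real.log β) + 2.65 / Real.log β := by positivity
  by_cases hint : Integrable (fun A => Real.log (cInvMax A).toReal / Real.log β)
    (sparseGaussian S Abar σ)
  swap
  · rw [integral_undef hint]; exact hR0
  rcases Nat.eq_zero_or_pos n with hn | hn
  · subst hn
    have : ∀ A : Matrix (Fin 0) (Fin 0) ℝ, Real.log (cInvMax A).toReal / Real.log β = 0 := by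
      intro A
      have : cInvMax A = 0 := by unfold cInvMax; simp
      rw [this]; simp
    simp only [this, integral_zero]
    exact hR0
  have hScard := aux_card hn S hS
  have hS' : (1 : ℝ) ≤ S.card := by exact_mod_cast hScard
  have hn' : (1 : ℝ) ≤ n := by exact_mod_cast hn
  obtain ⟨c, hc⟩ : ∃ c : ℝ, c = (n : ℝ) ^ 2 * S.card * (5 / 2 * ((1 + σ) / σ)) := ⟨_, rfl⟩
  have hc1 : 1 ≤ c := by
    rw [hc]
    have h1 : 1 ≤ (n : ℝ) ^ 2 := one_le_pow₀ hn'
    have h2 : 1 ≤ (n : ℝ) ^ 2 * S.card := one_le_mul_of_one_le_of_one_le h1 hS'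
    exact one_le_mul_of_one_le_of_one_le h2 (by linarith)
  have hmeas : Measurable (auxMat S) := by
    refine measurable_pi_iff.2 fun i => measurable_pi_iff.2 fun j => ?_
    exact ((auxMat_continuous S).matrix_elem i j).measurable
  obtain ⟨v, hv, hvσ⟩ : ∃ v : NNReal, v = ⟨σ ^ 2, sq_nonneg σ⟩ ∧ (v : ℝ) = σ ^ 2 :=
    ⟨⟨σ ^ 2, sq_nonneg σ⟩, rfl, rfl⟩
  have hsg : sparseGaussian S Abar σ =
      (Measure.pi fun p : S => gaussianReal (Abar p.1.1 p.1.2) v).map (auxMat S) := by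
    rw [hv]; rfl
  rw [hsg] at hint ⊢
  rw [integral_map hmeas.aemeasurable hint.1]
  have hint' := (integrable_map_measure hint.1 hmeas.aemeasurable).1 hint
  obtain ⟨iT, hT⟩ := auxT_int hn S hScard Abar hmax σ hσ v hvσ c hc
  calc _ ≤ ∫ g, (Real.log (2 * S.card) + Real.log c + auxT S c g) / Real.log β
        ∂(Measure.pi fun p : S => gaussianReal (Abar p.1.1 p.1.2) v) := by
        refine integral_mono hint' (((integrable_const _).add iT).div_const _) fun g => ?_
        exact div_le_div_of_nonneg_right (aux_pointwise S c hc1 hScard g) hlb.le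
    _ = (Real.log (2 * S.card) + Real.log c + ∫ g, auxT S c g
        ∂(Measure.pi fun p : S => gaussianReal (Abar p.1.1 p.1.2) v)) / Real.log β := by
        rw [integral_div, integral_add (integrable_const _) iT, integral_const]
        simp
    _ ≤ (Real.log ((1 + σ) / σ) + 2 * Real.log ((n : ℝ) * S.card) + 2.65) / Real.log β := by
        refine div_le_div_of_nonneg_right ?_ hlb.le
        have e : Real.log (2 * S.card) + Real.log c =
            Real.log 5 + Real.log ((1 + σ) / σ) + 2 * Real.log ((n : ℝ) * S.card) := by
          rw [hc, ← Real.log_mul (by positivity) (by positivity),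
            show 2 * (S.card : ℝ) * ((n : ℝ) ^ 2 * S.card * (5 / 2 * ((1 + σ) / σ)))
              = 5 * ((1 + σ) / σ) * ((n : ℝ) * S.card) ^ 2 by ring,
            Real.log_mul (by positivity) (by positivity),
            Real.log_mul (by positivity) (by positivity), Real.log_pow]
          norm_num
        have := aux_log_five
        rw [e]
        linarith
    _ = _ := by ring
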